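/- arXiv:2511.10344 — 3 statements merged into one kernel-verified Lean document; each statement's English description precedes it below -/
import Mathlib

section
/- For every gap-estimate sequence (Δ^m_k, r^m_k) for mean rewards μ with gaps Δ_k, and for every epoch index m ≥ 0 and every arm k: (6/7)·Δ_k − (3/4)·2^{−m} ≤ Δ^m_k ≤ (8/7)·Δ_k + 2^{−m}. -/
/-- A gap-estimate sequence for mean rewards `μ`: `D 0 k = 1`; for every epoch
`m+1`, the reward estimate `r (m+1) k` is within `D m k / 8` of `μ k`, and
`D (m+1) k = max (2^{-(m+1)}) (r_*^{m+1} - r (m+1) k)` where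
`r_*^{m+1} = max_k (r (m+1) k - D m k / 8)`. -/
structure GapEstSeq {K : Type*} [Fintype K] [Nonempty K] (μ : K → ℝ) where
  D : ℕ → K → ℝ
  r : ℕ → K → ℝ
  hD0 : ∀ k, D 0 k = 1
  hr : ∀ (m : ℕ) (k : K), |r (m + 1) k - μ k| ≤ D m k / 8
  hD : ∀ (m : ℕ) (k : K),
    D (m + 1) k = max ((2 : ℝ) ^ (-((m : ℤ) + 1)))
      ((Finset.univ.sup' Finset.univ_nonempty (fun k' => r (m + 1) k' - D m k' / 8))
        - r (m + 1) k)

/-!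
Each reward estimate `r^{m+1}_k` errs by at most `Δ^m_k / 8`, so `Δ^{m+1}_k`, unless it is the
floor `2^{-(m+1)}`, exceeds `Δ_k` by at most `Δ^m_k / 8`. The slope `8/7` of the upper bound is the
fixed point of `c ↦ 1 + c / 8`.
From below, `Δ^{m+1}_k ≥ Δ_k - Δ^m_{k*} / 4 - Δ^m_k / 8`. The upper bound at epoch `m`, applied to
`k*` (whose gap is `0`) and to `k`, turns this into
`Δ_k - 2^{-m} / 4 - (Δ_k / 7 + 2^{-m} / 8) = (6/7) Δ_k - (3/8) 2^{-m}`,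
so the lower bound needs no induction of its own.
-/

theorem zpow_neg_eq_mul_zpow_neg_add_one {G : Type*} [GroupWithZero G] {a : G} (ha : a ≠ 0)
    (n : ℤ) : a ^ (-n) = a * a ^ (-(n + 1)) := by
  rw [← zpow_one_add₀ ha]
  congr 1
  ring

section LowerConfidenceBound

variable {ι R : Type*} [AddCommGroup R] [LinearOrder R] [IsOrderedAddMonoid R]
  {s : Finset ι} {μ r w : ι → R}

theorem sup'_sub_le_of_abs_sub_le (hs : s.Nonempty) (hr : ∀ i ∈ s, |r i - μ i| ≤ w i) {M : R}
    (hM : ∀ i ∈ s, μ i ≤ M) : s.sup' hs (fun i ↦ r i - w i) ≤ M :=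
  Finset.sup'_le hs _ fun i hi ↦
    (sub_le_comm.mp (abs_sub_le_iff.mp (hr i hi)).1).trans (hM i hi)

theorem sub_two_nsmul_le_sup'_sub {i : ι} (hi : i ∈ s) (hr : |r i - μ i| ≤ w i) :
    μ i - 2 • w i ≤ s.sup' ⟨i, hi⟩ (fun j ↦ r j - w j) :=
  calc
    μ i - 2 • w i = μ i - w i - w i := by rw [two_nsmul, sub_sub]
    _ ≤ r i - w i := sub_le_sub_right (sub_le_comm.mp (abs_sub_le_iff.mp hr).2) _
    _ ≤ s.sup' ⟨i, hi⟩ (fun j ↦ r j - w j) := Finset.le_sup' (fun j ↦ r j - w j) hi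

end LowerConfidenceBound

namespace GapEstSeq

variable {K : Type*} [Fintype K] [Nonempty K] {μ : K → ℝ} (S : GapEstSeq μ)

/-- The pessimistic estimate `r_*^{m+1}` of the best mean reward. The index is shifted because
reward estimates start at epoch `1`. -/
noncomputable def bestRewardEstimate (m : ℕ) : ℝ :=
  Finset.univ.sup' Finset.univ_nonempty (fun k ↦ S.r (m + 1) k - S.D m k / 8)

theorem D_succ (m : ℕ) (k : K) :
    S.D (m + 1) k =
      max ((2 : ℝ) ^ (-((m : ℤ) + 1))) (S.bestRewardEstimate m - S.r (m + 1) k) :=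
  S.hD m k

theorem bestRewardEstimate_le {M : ℝ} (hM : ∀ k, μ k ≤ M) (m : ℕ) : S.bestRewardEstimate m ≤ M :=
  sup'_sub_le_of_abs_sub_le _ (fun k _ ↦ S.hr m k) (fun k _ ↦ hM k)

theorem sub_le_bestRewardEstimate (m : ℕ) (k : K) : μ k - S.D m k / 4 ≤ S.bestRewardEstimate m :=
  calc
    μ k - S.D m k / 4 = μ k - 2 • (S.D m k / 8) := by rw [nsmul_eq_mul]; ring
    _ ≤ S.bestRewardEstimate m :=
      sub_two_nsmul_le_sup'_sub (w := fun j ↦ S.D m j / 8) (Finset.mem_univ k) (S.hr m k)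

theorem D_succ_le_max {M : ℝ} (hM : ∀ k, μ k ≤ M) (m : ℕ) (k : K) :
    S.D (m + 1) k ≤ max ((2 : ℝ) ^ (-((m : ℤ) + 1))) (M - μ k + S.D m k / 8) := by
  rw [D_succ]
  refine max_le_max_left _ ?_
  have hbest := S.bestRewardEstimate_le hM m
  have hr := (abs_sub_le_iff.mp (S.hr m k)).2
  linarith

theorem sub_sub_le_D_succ (m : ℕ) (j k : K) :
    μ j - μ k - S.D m j / 4 - S.D m k / 8 ≤ S.D (m + 1) k := by
  rw [D_succ]
  refine le_max_of_le_right ?_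
  have hbest := S.sub_le_bestRewardEstimate m j
  have hr := (abs_sub_le_iff.mp (S.hr m k)).1
  linarith

theorem D_le {M : ℝ} (hM : ∀ k, μ k ≤ M) (m : ℕ) (k : K) :
    S.D m k ≤ (8 / 7) * (M - μ k) + (2 : ℝ) ^ (-(m : ℤ)) := by
  have hgap : 0 ≤ M - μ k := sub_nonneg.mpr (hM k)
  induction m with
  | zero =>
    rw [S.hD0, Nat.cast_zero, neg_zero, zpow_zero]
    linarith
  | succ m ih =>
    have hpos : (0 : ℝ) < 2 ^ (-((m : ℤ) + 1)) := by positivity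
    rw [zpow_neg_eq_mul_zpow_neg_add_one two_ne_zero] at ih
    rw [Nat.cast_succ]
    refine (S.D_succ_le_max hM m k).trans (max_le ?_ ?_) <;> linarith

theorem le_D_succ {kstar : K} (hks : ∀ k, μ k ≤ μ kstar) (m : ℕ) (k : K) :
    (6 / 7) * (μ kstar - μ k) - (3 / 4) * (2 : ℝ) ^ (-((m : ℤ) + 1)) ≤ S.D (m + 1) k := by
  have hpow : (2 : ℝ) ^ (-(m : ℤ)) = 2 * 2 ^ (-((m : ℤ) + 1)) :=
    zpow_neg_eq_mul_zpow_neg_add_one two_ne_zero _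
  calc
    (6 / 7) * (μ kstar - μ k) - (3 / 4) * (2 : ℝ) ^ (-((m : ℤ) + 1))
      = μ kstar - μ k - ((8 / 7) * (μ kstar - μ kstar) + 2 ^ (-(m : ℤ))) / 4
          - ((8 / 7) * (μ kstar - μ k) + 2 ^ (-(m : ℤ))) / 8 := by rw [hpow]; ring
    _ ≤ μ kstar - μ k - S.D m kstar / 4 - S.D m k / 8 := by
      gcongr
      · exact S.D_le hks m kstar
      · exact S.D_le hks m k
    _ ≤ S.D (m + 1) k := S.sub_sub_le_D_succ m kstar k

end GapEstSeq

/-- Suboptimality-gap sandwich for gap-estimate sequences: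
`(6/7)Δ_k − (3/4)2^{−m} ≤ Δ^m_k ≤ (8/7)Δ_k + 2^{−m}`. -/
theorem stmt_3 {K : Type*} [Fintype K] [Nonempty K]
    (μ : K → ℝ) (hμ : ∀ k, μ k ∈ Set.Icc (0 : ℝ) 1)
    (kstar : K) (hks : ∀ k, μ k ≤ μ kstar)
    (S : GapEstSeq μ) (m : ℕ) (k : K) :
    (6 / 7) * (μ kstar - μ k) - (3 / 4) * (2 : ℝ) ^ (-(m : ℤ)) ≤ S.D m k ∧
    S.D m k ≤ (8 / 7) * (μ kstar - μ k) + (2 : ℝ) ^ (-(m : ℤ)) := by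
  refine ⟨?_, S.D_le hks m k⟩
  cases m with
  | zero =>
    have hgap : μ kstar - μ k ≤ 1 := by linarith [(hμ kstar).2, (hμ k).1]
    rw [S.hD0, Nat.cast_zero, neg_zero, zpow_zero]
    linarith
  | succ m =>
    rw [Nat.cast_succ]
    exact S.le_D_succ hks m k
end

section
/- Let ι be a finite set, x : ι → ℝ, C ⊆ ι, and let L, U ⊆ ι be disjoint subsets with |L| = |U| = f and |C| ≤ f. Assume x(l) ≤ x(j) for every l ∈ L and every j ∈ ι \ L, and x(j) ≤ x(u) for every u ∈ U and every j ∈ ι \ U. Let B = ι \ (L ∪ U). Then there exists a weight function w : ι → ℝ with 0 ≤ w_j ≤ 1 for all j ∈ ι, w_j = 0 for every j ∈ C, Σ_{j∈ι} w_j = |B|, and Σ_{j∈B} x(j) = Σ_{j∈ι} w_j · x(j). -/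
/-!
Let `B` be the retained set. Since at most `f` agents are corrupted, each trimmed side contains at
least as many uncorrupted agents as there are corrupted agents in `B`. Pick exactly that many on
either side: the totals of the two picks enclose the total of `B ∩ C`, which is therefore a convex
combination `a * _ + b * _` of them. Weight `a` on the lower pick and `b` on the upper one thus
stand in for the corrupted part of `B`; even an agent in both picks gets weight only `a + b = 1`.
-/

open Finset

theorem sum_le_sum_of_card_eq_of_forall_le {ι κ M : Type*} [AddCommMonoid M] [Preorder M]
    [AddLeftMono M] {s : Finset ι} {t : Finset κ} {f : ι → M} {g : κ → M}
    (hcard : #s = #t) (hle : ∀ i ∈ s, ∀ j ∈ t, f i ≤ g j) : ∑ i ∈ s, f i ≤ ∑ j ∈ t, g j := by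
  let e := equivOfCardEq hcard
  calc ∑ i ∈ s, f i = ∑ i : s, f i := (sum_coe_sort s f).symm
    _ ≤ ∑ i : s, g (e i) := sum_le_sum fun i _ => hle i i.2 (e i) (e i).2
    _ = ∑ j : t, g j := e.sum_comp fun j : t => g j
    _ = ∑ j ∈ t, g j := sum_coe_sort t g

theorem card_inter_le_card_sdiff_of_disjoint {ι : Type*} [DecidableEq ι] {B C S : Finset ι}
    (hBS : Disjoint B S) (hCS : #C ≤ #S) : #(B ∩ C) ≤ #(S \ C) :=
  calc #(B ∩ C) ≤ #(C \ S) := card_le_card fun _ hj =>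
        mem_sdiff.2 ⟨mem_of_mem_inter_right hj, disjoint_left.1 hBS (mem_of_mem_inter_left hj)⟩
    _ ≤ #(S \ C) := card_sdiff_le_card_sdiff_iff.2 hCS

/-- `w` is a fractional subset of `s`, with weights in `[0, 1]`, that has the same size and the
same `x`-total as `B`, so that it can stand in for `B` in an average of `x`. The weights are
defined on all of `ι` and vanish outside `s`. -/
structure IsFractionalReplacement {ι K : Type*} [Semiring K] [PartialOrder K]
    (x : ι → K) (B s : Finset ι) (w : ι → K) : Prop where
  nonneg : ∀ j, 0 ≤ w j
  le_one : ∀ j, w j ≤ 1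
  eq_zero_of_notMem : ∀ j ∉ s, w j = 0
  sum_eq_card : ∑ j ∈ s, w j = #B
  sum_mul_eq_sum : ∑ j ∈ s, w j * x j = ∑ j ∈ B, x j

namespace IsFractionalReplacement

section Semiring

variable {ι K : Type*} [Semiring K] [PartialOrder K] {x w w' : ι → K} {B B' s s' : Finset ι}

theorem mono (h : IsFractionalReplacement x B s w) (hs : s ⊆ s') :
    IsFractionalReplacement x B s' w where
  nonneg := h.nonneg
  le_one := h.le_one
  eq_zero_of_notMem j hj := h.eq_zero_of_notMem j (notMem_mono hs hj)
  sum_eq_card := by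
    rw [← h.sum_eq_card, sum_subset hs fun j _ => h.eq_zero_of_notMem j]
  sum_mul_eq_sum := by
    rw [← h.sum_mul_eq_sum, sum_subset hs fun j _ hj => by rw [h.eq_zero_of_notMem j hj, zero_mul]]

variable [DecidableEq ι]

theorem refl [ZeroLEOneClass K] (x : ι → K) (B : Finset ι) :
    IsFractionalReplacement x B B fun j => if j ∈ B then 1 else 0 where
  nonneg j := by split_ifs <;> simp
  le_one j := by split_ifs <;> simp
  eq_zero_of_notMem _ hj := if_neg hj
  sum_eq_card := by simp
  sum_mul_eq_sum := by simp

theorem add_of_disjoint (h : IsFractionalReplacement x B s w)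
    (h' : IsFractionalReplacement x B' s' w') (hB : Disjoint B B') (hs : Disjoint s s') :
    IsFractionalReplacement x (B ∪ B') (s ∪ s') (w + w') := by
  have eq_zero_or_eq_zero (j : ι) : w j = 0 ∨ w' j = 0 := by
    by_cases hj : j ∈ s
    · exact .inr (h'.eq_zero_of_notMem j (disjoint_left.1 hs hj))
    · exact .inl (h.eq_zero_of_notMem j hj)
  have hw := h.mono (subset_union_left (s₂ := s'))
  have hw' := h'.mono (subset_union_right (s₁ := s))
  constructor
  case nonneg =>
    intro j
    obtain hj | hj := eq_zero_or_eq_zero j <;> simp [hj, h.nonneg, h'.nonneg]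
  case le_one =>
    intro j
    obtain hj | hj := eq_zero_or_eq_zero j <;> simp [hj, h.le_one, h'.le_one]
  case eq_zero_of_notMem =>
    intro j hj
    simp [hw.eq_zero_of_notMem j hj, hw'.eq_zero_of_notMem j hj]
  case sum_eq_card =>
    simp only [Pi.add_apply, sum_add_distrib, hw.sum_eq_card, hw'.sum_eq_card,
      card_union_of_disjoint hB, Nat.cast_add]
  case sum_mul_eq_sum =>
    simp only [Pi.add_apply, add_mul, sum_add_distrib, hw.sum_mul_eq_sum, hw'.sum_mul_eq_sum,
      sum_union hB]

theorem exists_of_sum_mem_segment [IsOrderedRing K] {P Q : Finset ι} (hP : #P = #B)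
    (hQ : #Q = #B) (hB : ∑ j ∈ B, x j ∈ segment K (∑ j ∈ P, x j) (∑ j ∈ Q, x j)) :
    ∃ w, IsFractionalReplacement x B (P ∪ Q) w := by
  obtain ⟨a, b, ha, hb, hab, hsum⟩ := hB
  refine ⟨fun j => (if j ∈ P then a else 0) + (if j ∈ Q then b else 0), ?_, ?_, ?_, ?_, ?_⟩
  · intro j
    positivity
  · intro j
    calc (if j ∈ P then a else 0) + (if j ∈ Q then b else 0) ≤ a + b :=
          add_le_add (by split_ifs <;> simp [ha]) (by split_ifs <;> simp [hb])
      _ = 1 := hab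
  · intro j hj
    rw [notMem_union] at hj
    rw [if_neg hj.1, if_neg hj.2, add_zero]
  · simp only [sum_add_distrib, sum_ite_mem, union_inter_cancel_left, union_inter_cancel_right,
      sum_const, nsmul_eq_mul, hP, hQ, ← mul_add, hab, mul_one]
  · simpa only [add_mul, ite_mul, zero_mul, sum_add_distrib, sum_ite_mem, union_inter_cancel_left,
      union_inter_cancel_right, ← mul_sum, smul_eq_mul] using hsum

end Semiring

variable {ι K : Type*} [DecidableEq ι] [Field K] [LinearOrder K] [IsStrictOrderedRing K]
  {x : ι → K} {B P Q : Finset ι}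

theorem exists_of_forall_le_of_card_le (hP : #B ≤ #P) (hQ : #B ≤ #Q)
    (hPB : ∀ p ∈ P, ∀ b ∈ B, x p ≤ x b) (hBQ : ∀ b ∈ B, ∀ q ∈ Q, x b ≤ x q) :
    ∃ w, IsFractionalReplacement x B (P ∪ Q) w := by
  obtain ⟨P', hP'P, hP'⟩ := exists_subset_card_eq hP
  obtain ⟨Q', hQ'Q, hQ'⟩ := exists_subset_card_eq hQ
  have lower : ∑ j ∈ P', x j ≤ ∑ j ∈ B, x j :=
    sum_le_sum_of_card_eq_of_forall_le hP' fun p hp => hPB p (hP'P hp)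
  have upper : ∑ j ∈ B, x j ≤ ∑ j ∈ Q', x j :=
    sum_le_sum_of_card_eq_of_forall_le hQ'.symm fun b hb q hq => hBQ b hb q (hQ'Q hq)
  obtain ⟨w, hw⟩ := exists_of_sum_mem_segment hP' hQ' (Icc_subset_segment ⟨lower, upper⟩)
  exact ⟨w, hw.mono (union_subset_union hP'P hQ'Q)⟩

end IsFractionalReplacement

theorem stmt_8_general {ι K : Type*} [DecidableEq ι] [Field K] [LinearOrder K]
    [IsStrictOrderedRing K] {x : ι → K} {B C L U : Finset ι}
    (hB : Disjoint B (L ∪ U)) (hCL : #C ≤ #L) (hCU : #C ≤ #U)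
    (hLB : ∀ l ∈ L, ∀ j ∈ B, x l ≤ x j) (hBU : ∀ j ∈ B, ∀ u ∈ U, x j ≤ x u) :
    ∃ w, IsFractionalReplacement x B ((B ∪ (L ∪ U)) \ C) w := by
  obtain ⟨hdisjL, hdisjU⟩ := disjoint_union_right.1 hB
  obtain ⟨w, hw⟩ : ∃ w, IsFractionalReplacement x (B ∩ C) (L \ C ∪ U \ C) w :=
    IsFractionalReplacement.exists_of_forall_le_of_card_le
      (card_inter_le_card_sdiff_of_disjoint hdisjL hCL)
      (card_inter_le_card_sdiff_of_disjoint hdisjU hCU)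
      (fun l hl j hj => hLB l (mem_sdiff.1 hl).1 j (mem_inter.1 hj).1)
      (fun j hj u hu => hBU j (mem_inter.1 hj).1 u (mem_sdiff.1 hu).1)
  have hdisj : Disjoint (B \ C) (L \ C ∪ U \ C) := by
    rw [← union_sdiff_distrib]
    exact hB.mono sdiff_subset sdiff_subset
  have hadd := (IsFractionalReplacement.refl x (B \ C)).add_of_disjoint hw
    (disjoint_sdiff_inter B C) hdisj
  rw [sdiff_union_inter, ← union_sdiff_distrib, ← union_sdiff_distrib] at hadd
  exact ⟨_, hadd⟩

/-- Core guarantee of the trimmed-mean filter: the sum of retained values equals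
a sub-convex combination (weights in `[0,1]`, total weight `|B|`) of the
uncorrupted agents' values only. -/
theorem stmt_8 {ι : Type*} [Fintype ι] [DecidableEq ι] (x : ι → ℝ)
    (C L U : Finset ι) (f : ℕ) (hLU : Disjoint L U)
    (hL : L.card = f) (hU : U.card = f) (hC : C.card ≤ f)
    (hLlow : ∀ l ∈ L, ∀ j, j ∉ L → x l ≤ x j)
    (hUhigh : ∀ u ∈ U, ∀ j, j ∉ U → x j ≤ x u) :
    ∃ w : ι → ℝ, (∀ j, 0 ≤ w j ∧ w j ≤ 1) ∧ (∀ j ∈ C, w j = 0) ∧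
      (∑ j, w j) = (((L ∪ U)ᶜ : Finset ι).card : ℝ) ∧
      ∑ j ∈ ((L ∪ U)ᶜ : Finset ι), x j = ∑ j, w j * x j := by
  obtain ⟨w, hw⟩ := stmt_8_general (B := (L ∪ U)ᶜ) disjoint_compl_left
    (hC.trans_eq hL.symm) (hC.trans_eq hU.symm)
    (fun l hl j hj => hLlow l hl j fun hjL => mem_compl.1 hj (mem_union_left U hjL))
    (fun j hj u hu => hUhigh u hu j fun hjU => mem_compl.1 hj (mem_union_right L hjU))
  have hw_univ := hw.mono (subset_univ _)
  exact ⟨w, fun j => ⟨hw.nonneg j, hw.le_one j⟩,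
    fun j hj => hw.eq_zero_of_notMem j (notMem_sdiff_of_mem_right hj),
    hw_univ.sum_eq_card, hw_univ.sum_mul_eq_sum.symm⟩
end

section
/- Let a ≥ 1 and b > 0 be reals, define N_m = ⌈a·4^{m−1}⌉ for every integer m ≥ 1, let C_1, C_2, … be nonnegative reals, and define ρ_0 = 0 and ρ_m = Σ_{s=1}^m C_s / (8^{m−s} · b · N_s) for m ≥ 1. Then for every integer M ≥ 1: Σ_{m=1}^M ρ_{m−1} · N_m ≤ (88/7) · (Σ_{s=1}^M C_s) / b. -/
/-!
The discounted sum `D m = ∑_{s ≤ m} c s / δ ^ (m - s)` satisfies `D (m + 1) = D m / δ + c (m + 1)`,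
so if the weights `w` grow at most by a factor `γ < δ` per step, then `D m * w m` contracts by
`γ / δ` up to the newly injected mass `c (m + 1) * w (m + 1)`. Taking `γ * δ * (D m * w m)` as a
potential, its decrease pays for `δ - γ` times each summand `D m * w (m + 1)`.
For `w m = N m` and `c s = C s / (b * N s)` the injected mass is `C s / b`. The rounded lengths
still grow at most by the factor `γ = 4`, since `⌈4 x⌉ ≤ 4 ⌈x⌉`, and `δ = 8` gives the constant
`γ * δ / (δ - γ) = 8 ≤ 88 / 7`.
-/

open Finset

section DiscountedSum

/-- The discounted cumulative sum `∑_{s=1}^m c s / δ ^ (m - s)`, whose terms lose a factor `δ` at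
each step after they enter. The offset rate `ρ` is the case `δ = 8`, `c s = C s / (b * N s)`. -/
def discountedSum {K : Type*} [DivisionRing K] (δ : K) (c : ℕ → K) (m : ℕ) : K :=
  ∑ s ∈ Icc 1 m, c s / δ ^ (m - s)

theorem discountedSum_zero {K : Type*} [DivisionRing K] (δ : K) (c : ℕ → K) :
    discountedSum δ c 0 = 0 := by
  simp [discountedSum]

theorem discountedSum_succ {K : Type*} [DivisionRing K] (δ : K) (c : ℕ → K) (m : ℕ) :
    discountedSum δ c (m + 1) = discountedSum δ c m / δ + c (m + 1) := by
  have discount_succ : ∀ s ∈ Icc 1 m, c s / δ ^ (m + 1 - s) = c s / δ ^ (m - s) / δ := by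
    intro s hs
    rw [Nat.succ_sub (mem_Icc.mp hs).2, pow_succ', div_mul_eq_div_div_swap]
  rw [discountedSum, sum_Icc_succ_top (Nat.le_add_left 1 m), sum_congr rfl discount_succ,
    ← sum_div, Nat.sub_self, pow_zero, div_one, discountedSum]

variable {K : Type*} [Field K] [LinearOrder K] [IsStrictOrderedRing K] {γ δ : K} {c w : ℕ → K}

theorem discountedSum_nonneg (hδ : 0 ≤ δ) (hc : ∀ s, 1 ≤ s → 0 ≤ c s) (m : ℕ) :
    0 ≤ discountedSum δ c m :=
  sum_nonneg fun s hs ↦ div_nonneg (hc s (mem_Icc.mp hs).1) (pow_nonneg hδ _)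

theorem discountedSum_mul_succ_le (hδ : 0 ≤ δ) (hc : ∀ s, 1 ≤ s → 0 ≤ c s)
    (hw : ∀ m, 1 ≤ m → w (m + 1) ≤ γ * w m) (m : ℕ) :
    discountedSum δ c m * w (m + 1) ≤ γ * (discountedSum δ c m * w m) := by
  obtain rfl | hm := m.eq_zero_or_pos
  · simp [discountedSum_zero]
  · calc
      discountedSum δ c m * w (m + 1) ≤ discountedSum δ c m * (γ * w m) :=
        mul_le_mul_of_nonneg_left (hw m hm) (discountedSum_nonneg hδ hc m)
      _ = γ * (discountedSum δ c m * w m) := mul_left_comm ..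

theorem sum_discountedSum_mul_add_potential_le (hδ : 0 < δ) (hc : ∀ s, 1 ≤ s → 0 ≤ c s)
    (hw : ∀ m, 1 ≤ m → w (m + 1) ≤ γ * w m) (n : ℕ) :
    (δ - γ) * ∑ m ∈ Icc 1 n, discountedSum δ c (m - 1) * w m
        + γ * δ * (discountedSum δ c n * w n)
      ≤ γ * δ * ∑ s ∈ Icc 1 n, c s * w s := by
  induction n with
  | zero => simp [discountedSum_zero]
  | succ n ih =>
    have potential_succ : δ * (discountedSum δ c (n + 1) * w (n + 1)) =
        discountedSum δ c n * w (n + 1) + δ * (c (n + 1) * w (n + 1)) := by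
      rw [discountedSum_succ]
      field_simp
    have growth := mul_le_mul_of_nonneg_left (discountedSum_mul_succ_le hδ.le hc hw n) hδ.le
    rw [sum_Icc_succ_top (Nat.le_add_left 1 n), sum_Icc_succ_top (Nat.le_add_left 1 n),
      Nat.add_sub_cancel]
    linear_combination ih + growth + γ * potential_succ

theorem sum_discountedSum_mul_le (hγ : 0 ≤ γ) (hγδ : γ < δ) (hc : ∀ s, 1 ≤ s → 0 ≤ c s)
    (hw₀ : ∀ m, 1 ≤ m → 0 ≤ w m) (hw : ∀ m, 1 ≤ m → w (m + 1) ≤ γ * w m) (n : ℕ) :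
    ∑ m ∈ Icc 1 n, discountedSum δ c (m - 1) * w m
      ≤ γ * δ / (δ - γ) * ∑ s ∈ Icc 1 n, c s * w s := by
  have hδ : 0 < δ := hγ.trans_lt hγδ
  have potential_nonneg : 0 ≤ γ * δ * (discountedSum δ c n * w n) := by
    obtain rfl | hn := n.eq_zero_or_pos
    · simp [discountedSum_zero]
    · exact mul_nonneg (mul_nonneg hγ hδ.le)
        (mul_nonneg (discountedSum_nonneg hδ.le hc n) (hw₀ n hn))
  rw [div_mul_eq_mul_div, le_div_iff₀' (sub_pos.mpr hγδ)]
  exact (le_add_of_nonneg_right potential_nonneg).trans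
    (sum_discountedSum_mul_add_potential_le hδ hc hw n)

end DiscountedSum

section NatCeil

variable {R : Type*} [CommSemiring R] [LinearOrder R] [IsOrderedRing R] [FloorSemiring R]

theorem natCeil_natCast_mul_le (r : ℕ) (x : R) : ⌈r * x⌉₊ ≤ r * ⌈x⌉₊ := by
  rw [Nat.ceil_le, Nat.cast_mul]
  exact mul_le_mul_of_nonneg_left (Nat.le_ceil x) r.cast_nonneg

theorem natCeil_mul_pow_succ_le (a : R) (r k : ℕ) : ⌈a * r ^ (k + 1)⌉₊ ≤ r * ⌈a * r ^ k⌉₊ := by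
  rw [pow_succ', mul_left_comm]
  exact natCeil_natCast_mul_le r _

end NatCeil

theorem stmt_10_general {K : Type*} [Field K] [LinearOrder K] [IsStrictOrderedRing K]
    [FloorSemiring K] {a b δ : K} {r : ℕ} (ha : 0 < a) (hb : 0 < b) (hr : 0 < r) (hrδ : r < δ)
    {N : ℕ → ℕ} (hN : ∀ m, 1 ≤ m → N m = ⌈a * r ^ (m - 1)⌉₊)
    {C : ℕ → K} (hC : ∀ s, 1 ≤ s → 0 ≤ C s)
    {ρ : ℕ → K} (hρ₀ : ρ 0 = 0)
    (hρ : ∀ m, 1 ≤ m → ρ m = ∑ s ∈ Icc 1 m, C s / (δ ^ (m - s) * b * N s)) (M : ℕ) :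
    ∑ m ∈ Icc 1 M, ρ (m - 1) * N m ≤ r * δ / (δ - r) * (∑ s ∈ Icc 1 M, C s) / b := by
  have N_pos : ∀ m, 1 ≤ m → (0 : K) < N m := by
    intro m hm
    rw [hN m hm, Nat.cast_pos, Nat.ceil_pos]
    positivity
  have N_succ_le : ∀ m, 1 ≤ m → (N (m + 1) : K) ≤ r * N m := by
    intro m hm
    obtain ⟨k, rfl⟩ := Nat.exists_eq_add_of_le' hm
    rw [hN _ hm, hN _ (Nat.le_add_left 1 _)]
    exact_mod_cast natCeil_mul_pow_succ_le a r k
  have ρ_eq : ρ = discountedSum δ fun s ↦ C s / (b * N s) := by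
    funext m
    obtain rfl | hm := m.eq_zero_or_pos
    · rw [hρ₀, discountedSum_zero]
    · simp only [hρ m hm, discountedSum, mul_assoc, div_mul_eq_div_div_swap]
  have injected_mass : ∀ s ∈ Icc 1 M, C s / (b * N s) * N s = C s / b := fun s hs ↦ by
    rw [← div_div, div_mul_cancel₀ _ (N_pos s (mem_Icc.mp hs).1).ne']
  rw [ρ_eq, mul_div_assoc, sum_div, ← sum_congr rfl injected_mass]
  exact sum_discountedSum_mul_le r.cast_nonneg hrδ
    (fun s hs ↦ div_nonneg (hC s hs) (mul_pos hb (N_pos s hs)).le)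
    (fun m hm ↦ (N_pos m hm).le) N_succ_le M

/-- Discounted-corruption sum bound: with epoch lengths `N m = ⌈a·4^{m−1}⌉` and
discounted offset rates `ρ m = Σ_{s=1}^m C s / (8^{m−s} b N s)`,
`Σ_{m=1}^M ρ_{m−1} N_m ≤ (88/7) (Σ_{s=1}^M C_s) / b`. -/
theorem stmt_10 (a b : ℝ) (ha : 1 ≤ a) (hb : 0 < b)
    (N : ℕ → ℕ) (hN : ∀ m, 1 ≤ m → N m = ⌈a * 4 ^ (m - 1)⌉₊)
    (C : ℕ → ℝ) (hC : ∀ s, 0 ≤ C s)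
    (ρ : ℕ → ℝ) (hρ0 : ρ 0 = 0)
    (hρ : ∀ m, 1 ≤ m →
      ρ m = ∑ s ∈ Finset.Icc 1 m, C s / (8 ^ (m - s) * b * (N s : ℝ)))
    (M : ℕ) (hM : 1 ≤ M) :
    ∑ m ∈ Finset.Icc 1 M, ρ (m - 1) * (N m : ℝ) ≤
      (88 / 7) * (∑ s ∈ Finset.Icc 1 M, C s) / b := by
  have hC_sum : 0 ≤ ∑ s ∈ Finset.Icc 1 M, C s := Finset.sum_nonneg fun s _ ↦ hC s
  calc
    _ ≤ 4 * 8 / (8 - 4) * (∑ s ∈ Finset.Icc 1 M, C s) / b :=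
      mod_cast stmt_10_general (r := 4) (δ := 8) (one_pos.trans_le ha) hb (by norm_num)
        (by norm_num) (mod_cast hN) (fun s _ ↦ hC s) hρ0 hρ M
    _ ≤ (88 / 7) * (∑ s ∈ Finset.Icc 1 M, C s) / b := by
      gcongr ?_ * _ / _
      norm_num
end
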